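/- arXiv:1904.08592 — 6 statements merged into one kernel-verified Lean document; each statement's English description precedes it below -/
import Mathlib

section
/- For every real number λ and every positive integer n, (−1)^n ℰ_{n,−λ}(−1) = 2·(1)_{n,λ} + ℰ_{n,λ} = ℰ_{n,λ}(2). -/
/-!
Write `F(λ,x) = Σ (x)_{n,λ} tⁿ/n! = (1+λt)^{x/λ}` and `E(λ) = Σ ℰ_{n,λ} tⁿ/n!` as formal power
series. Then `F(λ,x) F(λ,y) = F(λ,x+y)`, because both sides solve `(1+λt) G' = (x+y) G`, `G(0) = 1`;
substituting `t ↦ -t` turns `F(-λ,-x)` into `F(λ,x)`; the recursion for the Euler numbers reads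
`E(λ) (F(λ,1) + 1) = 2`; and `Σ ℰ_{n,λ}(x) tⁿ/n! = E(λ) F(λ,x)`.

Let `E'` be `E(-λ)` at `-t`. Then `E' (F(λ,-1) + 1) = 2`, and multiplication by `F(λ,1)` yields
`E' (1 + F(λ,1)) = 2 F(λ,1)`, so `E' = E(λ) F(λ,1)`. Thus the left side has generating function
`E' F(λ,1) = E(λ) F(λ,2)`, which by two uses of `E(λ) F(λ,1) = 2 - E(λ)` equals
`2 F(λ,1) - 2 + E(λ)`. The constant `-2` disappears for `n ≥ 1`.
-/

open Finset

/-- λ-falling factorial: `(x)_{n,λ} = x(x-λ)⋯(x-(n-1)λ)`. -/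
noncomputable def fallFac (lam x : ℝ) : ℕ → ℝ
  | 0 => 1
  | n + 1 => fallFac lam x n * (x - n * lam)

/-- Degenerate Euler numbers, defined by `ℰ_{0,λ}=1` and
`Σ_{l=0}^{n} C(n,l) ℰ_{l,λ} (1)_{n-l,λ} + ℰ_{n,λ} = 0` for `n ≥ 1`. -/
noncomputable def degE (lam : ℝ) : ℕ → ℝ
  | 0 => 1
  | n + 1 => -(1/2) * ∑ l ∈ (Finset.range (n+1)).attach,
      ((n+1).choose l.1 : ℝ) * degE lam l.1 * fallFac lam 1 (n + 1 - l.1)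
  decreasing_by exact Finset.mem_range.mp l.2

/-- Degenerate Euler polynomials `ℰ_{n,λ}(x) = Σ_{l=0}^n C(n,l) ℰ_{l,λ} (x)_{n-l,λ}`. -/
noncomputable def degEP (lam x : ℝ) (n : ℕ) : ℝ :=
  ∑ l ∈ Finset.range (n + 1), (n.choose l : ℝ) * degE lam l * fallFac lam x (n - l)

/-- Degenerate Bernstein polynomials `B_{k,n}(x|λ)` (vanishing for `k > n`). -/
noncomputable def bern (lam x : ℝ) (k n : ℕ) : ℝ :=
  (n.choose k : ℝ) * fallFac lam x k * fallFac lam (1 - x) (n - k)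

/-- Two variable degenerate Bernstein polynomials `B_{k,n}(x₁,x₂|λ)`. -/
noncomputable def bern2 (lam x1 x2 : ℝ) (k n : ℕ) : ℝ :=
  (n.choose k : ℝ) * fallFac lam x1 k * fallFac lam (1 - x2) (n - k)

/-- Higher order degenerate Euler polynomials `ℰ^{(k)}_{n,λ}(x)`. -/
noncomputable def degEPk (lam : ℝ) : ℕ → ℕ → ℝ → ℝ
  | 0, n, x => fallFac lam x n
  | k + 1, n, x => ∑ m ∈ Finset.range (n + 1),
      (n.choose m : ℝ) * degE lam m * degEPk lam k (n - m) x

open PowerSeries in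
/-- The exponential generating function of a real sequence. -/
noncomputable def egf (a : ℕ → ℝ) : ℝ⟦X⟧ := PowerSeries.mk fun n => a n / (n.factorial : ℝ)

lemma coeff_egf (a : ℕ → ℝ) (n : ℕ) :
    PowerSeries.coeff n (egf a) = a n / (n.factorial : ℝ) := by
  simp [egf]

/-- Products of exponential generating functions encode binomial convolutions. -/
lemma egf_mul (a b : ℕ → ℝ) :
    egf a * egf b = egf fun n => ∑ l ∈ Finset.range (n + 1), (n.choose l : ℝ) * a l * b (n - l) := by
  ext n
  rw [PowerSeries.coeff_mul, coeff_egf, Finset.Nat.sum_antidiagonal_eq_sum_range_succ_mk,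
    Finset.sum_div]
  refine Finset.sum_congr rfl fun l hl => ?_
  have hl' : l ≤ n := Nat.lt_succ_iff.mp (Finset.mem_range.mp hl)
  simp only [coeff_egf]
  rw [Nat.cast_choose ℝ hl']
  have h1 : (n.factorial : ℝ) ≠ 0 := by positivity
  have h2 : (l.factorial : ℝ) ≠ 0 := by positivity
  have h3 : ((n - l).factorial : ℝ) ≠ 0 := by positivity
  field_simp

/-- The substitution `t ↦ -t` on exponential generating functions. -/
lemma evalNegHom_egf (a : ℕ → ℝ) :
    PowerSeries.evalNegHom (egf a) = egf fun n => (-1) ^ n * a n := by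
  ext n
  simp [PowerSeries.evalNegHom, PowerSeries.coeff_rescale, coeff_egf, mul_div_assoc]

lemma egf_fallFac_ode (lam x : ℝ) :
    (1 + PowerSeries.C lam * PowerSeries.X) * PowerSeries.derivative ℝ (egf (fallFac lam x))
      = PowerSeries.C x * egf (fallFac lam x) := by
  ext n
  rw [add_mul, one_mul, mul_assoc, map_add, PowerSeries.coeff_C_mul, PowerSeries.coeff_C_mul]
  cases n with
  | zero =>
    rw [PowerSeries.coeff_zero_X_mul, PowerSeries.coeff_derivative, coeff_egf, coeff_egf]
    simp [fallFac]
  | succ n =>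
    rw [PowerSeries.coeff_succ_X_mul]
    simp only [PowerSeries.coeff_derivative, coeff_egf, fallFac, Nat.factorial_succ]
    have h1 : (n.factorial : ℝ) ≠ 0 := by positivity
    have h2 : (n : ℝ) + 1 ≠ 0 := by positivity
    have h3 : (n : ℝ) + 1 + 1 ≠ 0 := by positivity
    push_cast
    field_simp
    ring

/-- Uniqueness for `(1+λt) G' = z G`: comparing coefficients determines `G` from `G(0)`. -/
lemma ode_unique (lam z : ℝ) (G H : PowerSeries ℝ)
    (hG : (1 + PowerSeries.C lam * PowerSeries.X) * PowerSeries.derivative ℝ G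
      = PowerSeries.C z * G)
    (hH : (1 + PowerSeries.C lam * PowerSeries.X) * PowerSeries.derivative ℝ H
      = PowerSeries.C z * H)
    (h0 : PowerSeries.coeff 0 G = PowerSeries.coeff 0 H) : G = H := by
  ext n
  induction n with
  | zero => exact h0
  | succ n ih =>
    have eG := congrArg (PowerSeries.coeff n) hG
    have eH := congrArg (PowerSeries.coeff n) hH
    rw [add_mul, one_mul, mul_assoc, map_add, PowerSeries.coeff_C_mul,
      PowerSeries.coeff_C_mul] at eG eH
    have h2 : (n : ℝ) + 1 ≠ 0 := by positivity
    apply mul_right_cancel₀ h2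
    cases n with
    | zero =>
      simp only [PowerSeries.coeff_zero_X_mul, PowerSeries.coeff_derivative] at eG eH
      rw [ih] at eG
      linarith
    | succ n =>
      simp only [PowerSeries.coeff_succ_X_mul, PowerSeries.coeff_derivative] at eG eH
      rw [ih] at eG
      linarith

/-- The formal identity `(1+λt)^{x/λ} (1+λt)^{y/λ} = (1+λt)^{(x+y)/λ}`. -/
lemma egf_fallFac_mul (lam x y : ℝ) :
    egf (fallFac lam x) * egf (fallFac lam y) = egf (fallFac lam (x + y)) := by
  refine ode_unique lam (x + y) _ _ ?_ (egf_fallFac_ode lam (x + y)) ?_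
  · rw [Derivation.leibniz, map_add]
    simp only [smul_eq_mul]
    linear_combination egf (fallFac lam x) * egf_fallFac_ode lam y
      + egf (fallFac lam y) * egf_fallFac_ode lam x
  · simp [PowerSeries.coeff_mul, coeff_egf, fallFac]

lemma egf_fallFac_zero (lam : ℝ) : egf (fallFac lam 0) = 1 := by
  refine ode_unique lam 0 _ _ (egf_fallFac_ode lam 0) ?_ ?_
  · rw [Derivation.map_one_eq_zero]; simp
  · simp [coeff_egf, fallFac]

lemma fallFac_neg (lam x : ℝ) (n : ℕ) :
    fallFac (-lam) (-x) n = (-1) ^ n * fallFac lam x n := by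
  induction n with
  | zero => simp [fallFac]
  | succ n ih => rw [fallFac, fallFac, ih]; ring

lemma evalNegHom_egf_fallFac (lam x : ℝ) :
    PowerSeries.evalNegHom (egf (fallFac (-lam) x)) = egf (fallFac lam (-x)) := by
  rw [evalNegHom_egf]
  congr 1
  funext n
  have h := fallFac_neg lam (-x) n
  rw [neg_neg] at h
  rw [h, ← mul_assoc, ← mul_pow]
  simp

/-- The recursion for the Euler numbers as `E(λ) (F(λ,1) + 1) = 2`. -/
lemma egf_degE_mul (lam : ℝ) : egf (degE lam) * (egf (fallFac lam 1) + 1) = 2 := by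
  rw [mul_add, mul_one, egf_mul]
  ext n
  rw [map_add, coeff_egf, coeff_egf, show (2 : PowerSeries ℝ) = PowerSeries.C 2 from rfl,
    PowerSeries.coeff_C]
  cases n with
  | zero => norm_num [degE, fallFac]
  | succ n =>
    have h : degE lam (n + 1) = -(1/2) * ∑ l ∈ Finset.range (n + 1),
        ((n + 1).choose l : ℝ) * degE lam l * fallFac lam 1 (n + 1 - l) := by
      rw [degE, Finset.sum_attach (Finset.range (n + 1)) fun l =>
        ((n + 1).choose l : ℝ) * degE lam l * fallFac lam 1 (n + 1 - l)]
    rw [Finset.sum_range_succ, ← add_div]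
    have hz : ∑ l ∈ Finset.range (n + 1), ((n + 1).choose l : ℝ) * degE lam l
        * fallFac lam 1 (n + 1 - l) = -2 * degE lam (n + 1) := by
      rw [h]; ring
    rw [hz]
    have h0 : -2 * degE lam (n + 1) + ((n + 1).choose (n + 1) : ℝ) * degE lam (n + 1)
        * fallFac lam 1 (n + 1 - (n + 1)) + degE lam (n + 1) = 0 := by
      rw [Nat.choose_self, Nat.sub_self, fallFac, Nat.cast_one]; ring
    rw [h0, zero_div, if_neg n.succ_ne_zero]

lemma egf_degEP (lam x : ℝ) : egf (degEP lam x) = egf (degE lam) * egf (fallFac lam x) := by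
  rw [egf_mul]
  rfl

/-- Corollary 2.3: `(-1)^n ℰ_{n,-λ}(-1) = 2(1)_{n,λ} + ℰ_{n,λ} = ℰ_{n,λ}(2)` for `n ≥ 1`. -/
theorem degEP_neg_one (lam : ℝ) (n : ℕ) (hn : 0 < n) :
    (-1 : ℝ) ^ n * degEP (-lam) (-1) n = 2 * fallFac lam 1 n + degE lam n ∧
      2 * fallFac lam 1 n + degE lam n = degEP lam 2 n := by
  have hE := egf_degE_mul lam
  have hF : egf (fallFac lam 1) * egf (fallFac lam 1) = egf (fallFac lam 2) := by
    rw [egf_fallFac_mul]; norm_num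
  have hinv : egf (fallFac lam (-1)) * egf (fallFac lam 1) = 1 := by
    rw [egf_fallFac_mul, neg_add_cancel, egf_fallFac_zero]
  -- The substitution `t ↦ -t` in the recursion for `-λ` yields `E' (F(λ,-1) + 1) = 2`.
  have hE' := congrArg PowerSeries.evalNegHom (egf_degE_mul (-lam))
  rw [map_mul, map_add, map_one, evalNegHom_egf_fallFac, map_ofNat] at hE'
  have hrefl : PowerSeries.evalNegHom (egf (degE (-lam)))
      = egf (degE lam) * egf (fallFac lam 1) := by
    have h2 : (2 : PowerSeries ℝ) ≠ 0 := by
      intro h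
      have h' := congrArg PowerSeries.constantCoeff h
      rw [map_ofNat, map_zero] at h'
      exact two_ne_zero h'
    apply mul_left_cancel₀ h2
    linear_combination (-PowerSeries.evalNegHom (egf (degE (-lam)))) * hE
      + egf (degE lam) * egf (fallFac lam 1) * hE'
      - egf (degE lam) * PowerSeries.evalNegHom (egf (degE (-lam))) * hinv
  have hL : (egf fun n => (-1) ^ n * degEP (-lam) (-1) n) = egf (degEP lam 2) := by
    rw [← evalNegHom_egf, egf_degEP, egf_degEP, map_mul, evalNegHom_egf_fallFac, neg_neg, hrefl,
      ← hF, mul_assoc]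
  have hR : egf (degEP lam 2) = PowerSeries.C 2 * egf (fallFac lam 1) + egf (degE lam)
      - PowerSeries.C 2 := by
    rw [egf_degEP, ← hF, show PowerSeries.C (2 : ℝ) = 2 from rfl]
    linear_combination (egf (fallFac lam 1) - 1) * hE
  have hfac : (n.factorial : ℝ) ≠ 0 := by positivity
  have cL := congrArg (PowerSeries.coeff n) hL
  have cR := congrArg (PowerSeries.coeff n) hR
  rw [coeff_egf, coeff_egf, div_left_inj' hfac] at cL
  rw [map_sub, map_add, PowerSeries.coeff_C_mul, PowerSeries.coeff_C, if_neg hn.ne', sub_zero,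
    coeff_egf, coeff_egf, coeff_egf, ← mul_div_assoc, ← add_div, div_left_inj' hfac] at cR
  exact ⟨cL.trans cR, cR.symm⟩
end

section
/- Let λ ∈ ℝ with λ ≠ 0, let n be a nonnegative integer, and let x ∈ ℝ satisfy x ≠ kλ for every integer 0 ≤ k ≤ n−1. Then ℰ_{n,λ}(1−x) = (1−x)_{n,λ} + Σ_{l=1}^{n} B_{l,n}(x|λ) · ℰ_{l,λ} · ((−λ)^{1−l}/(l−1)!) · Σ_{k=0}^{l−1} (−1)^k C(l−1,k) / (x−kλ). -/
/-!
The `l = 0` term of `ℰ_{n,λ}(1-x)` is `(1-x)_{n,λ}`. For `l ≥ 1` the identity holds term by term: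
the inner sum is the partial fraction expansion
`Σ_k (-1)^k C(m,k) / (x - kλ) = (-λ)^m m! / (x)_{m+1,λ}` with `m = l - 1`
(`sum_div_mul_fallFac`), so the factor `(x)_{l,λ}` of `B_{l,n}(x|λ)` cancels. The expansion is
proved by induction on `m`: by Pascal's rule the sum is the `m`-th iterated backward difference of
`1/x` with step `λ`.
-/

open Finset

theorem fallFac_succ_left (lam x : ℝ) (m : ℕ) :
    fallFac lam x (m + 1) = x * fallFac lam (x - lam) m := by
  induction m with
  | zero => simp [fallFac]
  | succ m ih =>
    rw [fallFac, ih, fallFac]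
    push_cast
    ring

/-- Pascal's rule: the `(m+1)`-st alternating sum is a backward difference of the `m`-th one. -/
theorem sum_div_succ (lam x : ℝ) (m : ℕ) :
    ∑ k ∈ range (m + 2), (-1 : ℝ) ^ k * ((m + 1).choose k : ℝ) / (x - k * lam) =
      ∑ k ∈ range (m + 1), (-1 : ℝ) ^ k * (m.choose k : ℝ) / (x - k * lam) -
        ∑ k ∈ range (m + 1), (-1 : ℝ) ^ k * (m.choose k : ℝ) / (x - lam - k * lam) := by
  have h := Finset.sum_choose_succ_mul (fun k _ => (-1 : ℝ) ^ k / (x - k * lam)) m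
  calc
    _ = ∑ k ∈ range (m + 2), ((m + 1).choose k : ℝ) * ((-1 : ℝ) ^ k / (x - k * lam)) :=
      Finset.sum_congr rfl fun k _ => by ring
    _ = _ := by
      rw [h, sub_eq_add_neg, ← Finset.sum_neg_distrib]
      congr 1 <;> refine Finset.sum_congr rfl fun k _ => ?_ <;> push_cast
      · ring
      · rw [show x - ((k : ℝ) + 1) * lam = x - lam - k * lam by ring]
        ring

/-- Partial fraction expansion of `1 / (x)_{m+1,λ}`, with the denominator cleared. -/
theorem sum_div_mul_fallFac (lam : ℝ) (m : ℕ) (x : ℝ) (hx : ∀ k : ℕ, k < m + 1 → x ≠ k * lam) :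
    (∑ k ∈ range (m + 1), (-1 : ℝ) ^ k * (m.choose k : ℝ) / (x - k * lam)) *
      fallFac lam x (m + 1) = (-lam) ^ m * m.factorial := by
  induction m generalizing x with
  | zero =>
    have h0 : x ≠ 0 := by simpa using hx 0 (by omega)
    simp [fallFac, h0]
  | succ m ih =>
    have h1 := ih x fun k hk => hx k (by omega)
    have h2 := ih (x - lam) fun k hk h => hx (k + 1) (by omega) (by push_cast; linarith)
    -- Each of the two sums pairs with the factorization of `(x)_{m+2,λ}` containing its denominator.
    rw [sum_div_succ, sub_mul]
    nth_rewrite 2 [fallFac_succ_left]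
    rw [fallFac, Nat.factorial_succ]
    push_cast
    linear_combination (x - (m + 1) * lam) * h1 - x * h2

/-- Theorem 2.4: expansion of `ℰ_{n,λ}(1-x)` via degenerate Bernstein polynomials. -/
theorem degEP_one_sub_eq (lam : ℝ) (hlam : lam ≠ 0) (n : ℕ) (x : ℝ)
    (hx : ∀ k : ℕ, k < n → x ≠ k * lam) :
    degEP lam (1 - x) n =
      fallFac lam (1 - x) n +
        ∑ l ∈ Finset.Icc 1 n,
          bern lam x l n * degE lam l * ((-lam) ^ ((1 : ℤ) - l) / (l - 1).factorial) *
            ∑ k ∈ Finset.range l, (-1 : ℝ) ^ k * ((l - 1).choose k : ℝ) / (x - k * lam) := by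
  rw [degEP, Finset.range_eq_Ico, Finset.sum_eq_sum_Ico_succ_bot (Nat.succ_pos n)]
  congr 1
  · simp [degE]
  · refine Finset.sum_congr (by ext; simp) fun l hl => ?_
    obtain ⟨hl1, hln⟩ := Finset.mem_Icc.mp hl
    obtain ⟨m, rfl⟩ : ∃ m, l = m + 1 := ⟨l - 1, by omega⟩
    have key := sum_div_mul_fallFac lam m x fun k hk => hx k (by omega)
    have hz : (-lam) ^ ((1 : ℤ) - ((m + 1 : ℕ) : ℤ)) = ((-lam) ^ m)⁻¹ := by
      rw [show (1 : ℤ) - ((m + 1 : ℕ) : ℤ) = -(m : ℤ) by push_cast; ring, zpow_neg, zpow_natCast]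
    have hp : (-lam) ^ m ≠ 0 := pow_ne_zero _ (neg_ne_zero.mpr hlam)
    have hf : (m.factorial : ℝ) ≠ 0 := Nat.cast_ne_zero.mpr m.factorial_ne_zero
    rw [hz, bern, Nat.add_sub_cancel]
    generalize (∑ k ∈ range (m + 1), (-1 : ℝ) ^ k * (m.choose k : ℝ) / (x - k * lam)) = S at key ⊢
    field_simp
    linear_combination -((n.choose (m + 1) : ℝ) * degE lam (m + 1) *
      fallFac lam (1 - x) (n - (m + 1))) * key
end

section
/- Let λ ∈ ℝ with λ ≠ 0 and let n be a nonnegative integer such that 1 + kλ ≠ 0 for every integer 0 ≤ k ≤ n−1. Then ℰ_{n,λ}(2) = (2)_{n,λ} − Σ_{l=1}^{n} B_{l,n}(−1|λ) · ℰ_{l,λ} · ((−λ)^{1−l}/(l−1)!) · Σ_{k=0}^{l−1} (−1)^k C(l−1,k) / (1+kλ). -/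
/-!
The `l = 0` term of `ℰ_{n,λ}(2)` is `(2)_{n,λ}`, and for `l ≥ 1` the terms agree with those on the
right because the factor attached to `C(n,l) ℰ_{l,λ} (2)_{n-l,λ}` there equals `-1`. This is the
partial fraction identity `Σ_{k=0}^m (-1)^k C(m,k) / (a + kλ) = m! λ^m / ∏_{k=0}^m (a + kλ)`
(`sum_partial_fraction`) at `a = 1`, `m = l - 1`, combined with
`(-1)_{l,λ} = (-1)^l ∏_{k<l} (1 + kλ)` (`fallFac_neg_one`).
-/

open Finset

/-- Partial fractions, by induction on `m`: Pascal's rule gives `S_{m+1}(a) = S_m(a) - S_m(a + λ)`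
for the left-hand side `S_m(a)`. -/
lemma sum_partial_fraction (lam : ℝ) (m : ℕ) : ∀ a : ℝ,
    (∀ k : ℕ, k < m + 1 → a + (k : ℝ) * lam ≠ 0) →
    ∑ k ∈ Finset.range (m + 1), (-1 : ℝ) ^ k * (m.choose k : ℝ) / (a + k * lam) =
      m.factorial * lam ^ m / ∏ k ∈ Finset.range (m + 1), (a + (k : ℝ) * lam) := by
  induction m with
  | zero => intro a _; simp
  | succ m ih =>
    intro a ha
    have shift : ∀ k : ℕ, a + lam + (k : ℝ) * lam = a + ((k + 1 : ℕ) : ℝ) * lam := by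
      intro k; push_cast; ring
    have h1 := ih a (fun k hk => ha k (by omega))
    have h2 := ih (a + lam) (fun k hk => by rw [shift]; exact ha (k + 1) (by omega))
    simp only [shift] at h2
    have pascal := Finset.sum_choose_succ_mul
      (fun k _ => (-1 : ℝ) ^ k / (a + (k : ℝ) * lam)) m
    have hsum : ∑ k ∈ Finset.range (m + 1 + 1),
          (-1 : ℝ) ^ k * ((m + 1).choose k : ℝ) / (a + k * lam) =
        ∑ k ∈ Finset.range (m + 1), (-1 : ℝ) ^ k * (m.choose k : ℝ) / (a + k * lam) -
        ∑ k ∈ Finset.range (m + 1),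
          (-1 : ℝ) ^ k * (m.choose k : ℝ) / (a + ((k + 1 : ℕ) : ℝ) * lam) := by
      rw [← Finset.sum_sub_distrib]
      rw [← Finset.sum_add_distrib] at pascal
      convert pascal using 2 <;> ring
    -- The two products share the middle factor `Q = ∏_{k=1}^m (a + kλ)`.
    have hQ : ∏ k ∈ Finset.range m, (a + ((k + 1 : ℕ) : ℝ) * lam) ≠ 0 :=
      Finset.prod_ne_zero_iff.mpr fun k hk =>
        ha (k + 1) (by have := Finset.mem_range.mp hk; omega)
    have h0 : a ≠ 0 := by simpa using ha 0 (by omega)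
    have hm := ha (m + 1) (by omega)
    rw [hsum, h1, h2, Finset.prod_range_succ _ (m + 1), Finset.prod_range_succ' _ m,
      Finset.prod_range_succ _ m, Nat.factorial_succ]
    generalize ∏ k ∈ Finset.range m, (a + ((k + 1 : ℕ) : ℝ) * lam) = Q at hQ ⊢
    push_cast at hm ⊢
    simp only [zero_mul, add_zero]
    field_simp
    ring

lemma fallFac_neg_one (lam : ℝ) (n : ℕ) :
    fallFac lam (-1) n = (-1) ^ n * ∏ k ∈ Finset.range n, (1 + (k : ℝ) * lam) := by
  induction n with
  | zero => simp [fallFac]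
  | succ n ih => rw [fallFac, ih, Finset.prod_range_succ, pow_succ]; ring

lemma fallFac_neg_one_mul_sum (lam : ℝ) (hlam : lam ≠ 0) (m : ℕ)
    (h : ∀ k : ℕ, k < m + 1 → 1 + (k : ℝ) * lam ≠ 0) :
    fallFac lam (-1) (m + 1) * ((-lam) ^ (-(m : ℤ)) / m.factorial) *
      ∑ k ∈ Finset.range (m + 1), (-1 : ℝ) ^ k * (m.choose k : ℝ) / (1 + k * lam) = -1 := by
  have hP : ∏ k ∈ Finset.range (m + 1), (1 + (k : ℝ) * lam) ≠ 0 :=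
    Finset.prod_ne_zero_iff.mpr fun k hk => h k (Finset.mem_range.mp hk)
  have hf : (m.factorial : ℝ) ≠ 0 := by positivity
  rw [sum_partial_fraction lam m 1 h, fallFac_neg_one, zpow_neg, zpow_natCast, neg_pow lam]
  have hs : ((-1 : ℝ) ^ m) ≠ 0 := by simp
  generalize ∏ k ∈ Finset.range (m + 1), (1 + (k : ℝ) * lam) = P at hP ⊢
  field_simp
  ring

/-- Corollary 2.5: expansion of `ℰ_{n,λ}(2)` via degenerate Bernstein polynomials at `-1`. -/
theorem degEP_two_eq (lam : ℝ) (hlam : lam ≠ 0) (n : ℕ)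
    (h : ∀ k : ℕ, k < n → 1 + (k : ℝ) * lam ≠ 0) :
    degEP lam 2 n =
      fallFac lam 2 n -
        ∑ l ∈ Finset.Icc 1 n,
          bern lam (-1) l n * degE lam l * ((-lam) ^ ((1 : ℤ) - l) / (l - 1).factorial) *
            ∑ k ∈ Finset.range l, (-1 : ℝ) ^ k * ((l - 1).choose k : ℝ) / (1 + k * lam) := by
  have hrange : Finset.range (n + 1) = insert 0 (Finset.Icc 1 n) := by
    ext k; simp; omega
  rw [degEP, hrange, Finset.sum_insert (by simp), sub_eq_add_neg, ← Finset.sum_neg_distrib]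
  congr 1
  · simp [degE]
  · refine Finset.sum_congr rfl fun l hl => ?_
    obtain ⟨h1, h2⟩ := Finset.mem_Icc.mp hl
    obtain ⟨m, rfl⟩ : ∃ m, l = m + 1 := ⟨l - 1, by omega⟩
    have key := fallFac_neg_one_mul_sum lam hlam m (fun k hk => h k (by omega))
    have he : (1 : ℤ) - ((m + 1 : ℕ) : ℤ) = -(m : ℤ) := by push_cast; ring
    rw [bern, he, Nat.add_sub_cancel, show (1 : ℝ) - -1 = 2 by norm_num]
    linear_combination
      (n.choose (m + 1) : ℝ) * degE lam (m + 1) * fallFac lam 2 (n - (m + 1)) * key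
end

section
/- For all real numbers λ, x₁, x₂ and all positive integers n, k with k ≤ n, the recurrence B_{k,n}(x₁,x₂|λ) = (1−x₂−(n−k−1)λ)·B_{k,n−1}(x₁,x₂|λ) + (x₁−(k−1)λ)·B_{k−1,n−1}(x₁,x₂|λ) holds. -/
/-!
The recurrence is Pascal's rule `C(n,k) = C(n-1,k-1) + C(n-1,k)` combined with the one-step
recursion `(x)_{m+1,λ} = (x)_{m,λ} (x - mλ)`: in the `C(n-1,k)` part the last factor of
`(1-x₂)_{n-k,λ}` is split off, in the `C(n-1,k-1)` part the last factor of `(x₁)_{k,λ}`.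
-/

open Finset

/-- Theorem 2.7: recurrence for two variable degenerate Bernstein polynomials. -/
theorem bern2_recurrence (lam x1 x2 : ℝ) (k n : ℕ) (hk : 0 < k) (hn : 0 < n) (hkn : k ≤ n) :
    bern2 lam x1 x2 k n =
      (1 - x2 - ((n : ℝ) - k - 1) * lam) * bern2 lam x1 x2 k (n - 1) +
        (x1 - ((k : ℝ) - 1) * lam) * bern2 lam x1 x2 (k - 1) (n - 1) := by
  obtain ⟨j, rfl⟩ : ∃ j, k = j + 1 := ⟨k - 1, by omega⟩
  obtain ⟨m, rfl⟩ : ∃ m, n = j + m + 1 := ⟨n - (j + 1), by omega⟩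
  cases m with
  | zero =>
    -- Here `k = n`, and the first summand vanishes because `C(n - 1, n) = 0`.
    simp [bern2, fallFac]
    ring
  | succ m =>
    have h1 : j + (m + 1) + 1 - (j + 1) = m + 1 := by omega
    have h2 : j + (m + 1) - (j + 1) = m := by omega
    have h3 : j + (m + 1) - j = m + 1 := by omega
    simp only [bern2, Nat.add_sub_cancel, h1, h2, h3, fallFac,
      Nat.choose_succ_succ' (j + (m + 1)) j]
    push_cast
    ring
end

section
/- For all real numbers λ, x₁, x₂ and every nonnegative integer n, Σ_{k=0}^{n} B_{k,n}(x₁,x₂|λ) = (1+x₁−x₂)_{n,λ}. -/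
/-!
The identity is the Chu–Vandermonde convolution for `λ`-falling factorials,
`(x + y)_{n,λ} = ∑_{i+j=n} C(n,i) (x)_{i,λ} (y)_{j,λ}` (`fallFac_add`), at `x = x₁`, `y = 1 - x₂`.
The convolution follows by induction on `n`: for `i + j = n` the new factor splits as
`x + y - nλ = (x - iλ) + (y - jλ)`, which raises either `i` or `j` by one, and Pascal's rule
recombines the two resulting sums.
-/

open Finset

/-- Chu–Vandermonde identity for `λ`-falling factorials. -/
theorem fallFac_add (lam x y : ℝ) (n : ℕ) :
    ∑ p ∈ antidiagonal n, (n.choose p.1 : ℝ) * (fallFac lam x p.1 * fallFac lam y p.2) =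
      fallFac lam (x + y) n := by
  induction n with
  | zero => simp [fallFac]
  | succ n ih =>
    rw [Finset.sum_antidiagonal_choose_succ_mul
      (fun i j => fallFac lam x i * fallFac lam y j) n, fallFac, ← ih, Finset.sum_mul,
      ← Finset.sum_add_distrib]
    refine Finset.sum_congr rfl fun p hp => ?_
    have h : p.1 + p.2 = n := mem_antidiagonal.mp hp
    have hc : n.choose p.2 = n.choose p.1 := by
      rw [← h, Nat.choose_symm_add]
    have hn : (n : ℝ) = p.1 + p.2 := by rw [← h]; push_cast; rfl
    simp only [hc, fallFac]
    rw [hn]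
    ring

/-- `Σ_{k=0}^n B_{k,n}(x₁,x₂|λ) = (1+x₁-x₂)_{n,λ}`. -/
theorem bern2_sum (lam x1 x2 : ℝ) (n : ℕ) :
    ∑ k ∈ Finset.range (n + 1), bern2 lam x1 x2 k n = fallFac lam (1 + x1 - x2) n := by
  rw [show 1 + x1 - x2 = x1 + (1 - x2) by ring, ← fallFac_add,
    Finset.Nat.sum_antidiagonal_eq_sum_range_succ_mk]
  exact Finset.sum_congr rfl fun k _ => mul_assoc _ _ _
end

section
/- For all real numbers λ, x₁, x₂ and all integers 1 ≤ i ≤ n, C(n,i)·(x₁)_{i,λ}·(1+x₁−x₂−iλ)_{n−i,λ} = Σ_{k=i}^{n} C(k,i)·B_{k,n}(x₁,x₂|λ). -/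
/-!
The proof rests on two properties of the λ-falling factorial: the shift rule
`(x)_{i+j,λ} = (x)_{i,λ} (x - iλ)_{j,λ}` (`fallFac_add`) and the Vandermonde identity
`(x+y)_{n,λ} = Σ_{a+b=n} C(n,a) (x)_{a,λ} (y)_{b,λ}` (`fallFac_vandermonde`).
Since `C(n,k) C(k,i) = C(n,i) C(n-i,k-i)`, the shift rule pulls `C(n,i) (x₁)_{i,λ}` out of every
summand on the right, and what remains is the Vandermonde expansion of
`((x₁ - iλ) + (1 - x₂))_{n-i,λ}`.
-/

open Finset

theorem fallFac_add_s14 (lam x : ℝ) (i j : ℕ) :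
    fallFac lam x (i + j) = fallFac lam x i * fallFac lam (x - i * lam) j := by
  induction j with
  | zero => simp [fallFac]
  | succ j ih =>
    rw [← Nat.add_assoc]
    simp only [fallFac, ih]
    push_cast
    ring

/-- Vandermonde identity for λ-falling factorials. The induction step splits the new factor
`x + y - nλ` as `(x - aλ) + (y - bλ)` in the summand with `a + b = n`. -/
theorem fallFac_vandermonde (lam x y : ℝ) (n : ℕ) :
    fallFac lam (x + y) n = ∑ ab ∈ antidiagonal n,
      (n.choose ab.1 : ℝ) * (fallFac lam x ab.1 * fallFac lam y ab.2) := by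
  induction n with
  | zero => simp [fallFac]
  | succ n ih =>
    rw [sum_antidiagonal_choose_succ_mul (fun a b => fallFac lam x a * fallFac lam y b),
      ← sum_add_distrib, fallFac, ih, sum_mul]
    refine sum_congr rfl ?_
    rintro ⟨a, b⟩ hab
    rw [HasAntidiagonal.mem_antidiagonal] at hab
    simp only at hab ⊢
    subst hab
    rw [← Nat.choose_symm_add (a := a) (b := b)]
    simp only [fallFac]
    push_cast
    ring

/-- Theorem 2.8: `C(n,i)(x₁)_{i,λ}(1+x₁-x₂-iλ)_{n-i,λ} = Σ_{k=i}^n C(k,i) B_{k,n}(x₁,x₂|λ)`. -/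
theorem bern2_moment (lam x1 x2 : ℝ) (i n : ℕ) (hi : 1 ≤ i) (hin : i ≤ n) :
    (n.choose i : ℝ) * fallFac lam x1 i * fallFac lam (1 + x1 - x2 - i * lam) (n - i) =
      ∑ k ∈ Finset.Icc i n, (k.choose i : ℝ) * bern2 lam x1 x2 k n := by
  obtain ⟨m, rfl⟩ := Nat.exists_eq_add_of_le hin
  rw [Nat.add_sub_cancel_left,
    show 1 + x1 - x2 - i * lam = (x1 - i * lam) + (1 - x2) by ring,
    fallFac_vandermonde, Finset.Nat.sum_antidiagonal_eq_sum_range_succ_mk, mul_sum,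
    ← Finset.Ico_add_one_right_eq_Icc, sum_Ico_eq_sum_range,
    show i + m + 1 - i = m + 1 by omega]
  refine sum_congr rfl fun k _ => ?_
  have hchoose : ((i + m).choose (i + k) : ℝ) * ((i + k).choose i : ℝ)
      = ((i + m).choose i : ℝ) * (m.choose k : ℝ) := by
    have h := Nat.choose_mul (n := i + m) (Nat.le_add_right i k)
    rw [Nat.add_sub_cancel_left, Nat.add_sub_cancel_left] at h
    exact_mod_cast h
  rw [bern2, fallFac_add_s14, Nat.add_sub_add_left]
  linear_combination (-(fallFac lam x1 i * fallFac lam (x1 - i * lam) k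
    * fallFac lam (1 - x2) (m - k))) * hchoose
end
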